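/- Let d ∈ ℕ, m ∈ ℕ with m ≥ 2, c > 0, σ ≤ 1, and let f : ℝ^d → ℝ be a Gevrey function on ℝ^d with parameters c and σ. Let x ∈ ℝ^d satisfy m c d ‖x‖_∞ < 1. Then the series Σ_{k=0}^∞ (1/k!) (Σ_{α ∈ [d]^k} ∂_α f(0) x^α) (Σ_{ℓ=−m}^m a_ℓ^{(2m)} ℓ^k) converges absolutely, and f_{(2m)}(x) = f(0) + ∇f(0)·x + Σ_{k=2m+1}^∞ (1/k!) (Σ_{α ∈ [d]^k} ∂_α f(0) x^α) (Σ_{ℓ=−m}^m a_ℓ^{(2m)} ℓ^k). -/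

import Mathlib

/-!
Along the line `t ↦ t • y`, the `k`-th derivative of `f` is the sum of `∂_α f (t • y) y^α` over
`α ∈ [d]^k` (`iteratedDeriv_comp_smul`), and for `σ ≤ 1` the Gevrey bound makes it at most
`(1/2) k! (c d ‖y‖_∞)^k` (`abs_lineDerivSum_le`). Hence the Lagrange remainder tends to `0` and `f`
is the sum of its Taylor series at every `y` with `c d ‖y‖_∞ < 1` (`tendsto_taylor_sum`). This
applies to every `y = ℓ x` with `|ℓ| ≤ m`. Summing over `ℓ` with weights `a_ℓ`, and using
`(ℓ x)^α = ℓ^k x^α`, gives the full series for the smoothing, dominated by the geometric series of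
ratio `m c d ‖x‖_∞`.

It remains to evaluate the moments `∑ a_ℓ ℓ^k` for `k ≤ 2m`. The moment of order `0` is `1` since
the `a_ℓ` with `ℓ ≠ 0` are odd in `ℓ`. For `k ≥ 1`, multiplying by `ℓ` cancels the factor `1/ℓ` and
leaves the signed central binomial weights, except that their `ℓ = 0` term is missing. The `2m`-th
finite difference annihilates polynomials of degree below `2m`, so the moment is `1` for `k = 1`
(the contribution of the missing term) and `0` for `2 ≤ k ≤ 2m` (`sum_centralCoeff_mul_pow_succ`).
-/

/-- Partial derivative of `f : ℝ^d → ℝ` in the `j`-th coordinate direction. -/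
noncomputable def pderiv' {d : ℕ} (j : Fin d) (f : (Fin d → ℝ) → ℝ) :
    (Fin d → ℝ) → ℝ :=
  fun x => fderiv ℝ f x (Pi.single j 1)

/-- Consecutive partial differentiation `∂_α = ∂_{α₁}∂_{α₂}⋯∂_{α_k}` along a
multi-index `α ∈ [d]^k`, encoded as a list of coordinates. -/
noncomputable def pderivMulti {d : ℕ} : List (Fin d) → ((Fin d → ℝ) → ℝ) → ((Fin d → ℝ) → ℝ)
  | [], f => f
  | j :: α, f => pderiv' j (pderivMulti α f)

/-- The central difference coefficients `a_ℓ^{(2m)}`. -/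
noncomputable def centralCoeff (m : ℕ) (ℓ : ℤ) : ℝ :=
  if ℓ = 0 then 1
  else (-1 : ℝ) ^ (ℓ + 1) * (Nat.factorial m : ℝ) ^ 2 /
    ((ℓ : ℝ) * (Nat.factorial (m + ℓ).toNat : ℝ) * (Nat.factorial (m - ℓ).toNat : ℝ))

/-- The `2m`-th order smoothing `f_{(2m)}(x) = Σ_{ℓ=−m}^m a_ℓ^{(2m)} f(ℓ x)`. -/
noncomputable def smoothing {d : ℕ} (m : ℕ) (f : (Fin d → ℝ) → ℝ) (x : Fin d → ℝ) : ℝ :=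
  ∑ ℓ ∈ Finset.Icc (-(m : ℤ)) (m : ℤ), centralCoeff m ℓ * f ((ℓ : ℝ) • x)

/-! ### Derivatives along lines and the Gevrey bound -/

/-- The `k`-th derivative along the line `t ↦ t • y`: the sum of `∂_α f (t • y) y^α` over the
multi-indices `α ∈ [d]^k`. -/
noncomputable def lineDerivSum {d : ℕ} (f : (Fin d → ℝ) → ℝ) (y : Fin d → ℝ) (k : ℕ) (t : ℝ) : ℝ :=
  ∑ α : Fin k → Fin d, pderivMulti (List.ofFn α) f (t • y) * ∏ i, y (α i)

lemma contDiff_pderivMulti {d : ℕ} {f : (Fin d → ℝ) → ℝ} (hf : ContDiff ℝ (⊤ : ℕ∞) f)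
    (α : List (Fin d)) : ContDiff ℝ (⊤ : ℕ∞) (pderivMulti α f) := by
  induction α with
  | nil => exact hf
  | cons j α ih =>
    have h : ContDiff ℝ (⊤ : ℕ∞) (fderiv ℝ (pderivMulti α f)) := ih.fderiv_right (by norm_num)
    exact h.clm_apply contDiff_const

lemma hasDerivAt_comp_smul {d : ℕ} {g : (Fin d → ℝ) → ℝ} (hg : ContDiff ℝ (⊤ : ℕ∞) g)
    (y : Fin d → ℝ) (t : ℝ) :
    HasDerivAt (fun s : ℝ => g (s • y)) (fderiv ℝ g (t • y) y) t := by
  have h1 : HasFDerivAt g (fderiv ℝ g (t • y)) (t • y) :=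
    ((hg.differentiable (by norm_num)) _).hasFDerivAt
  have h2 : HasDerivAt (fun s : ℝ => s • y) y t := by
    simpa using (hasDerivAt_id t).smul_const y
  exact h1.comp_hasDerivAt t h2

lemma fderiv_apply_eq_sum_pderiv {d : ℕ} (g : (Fin d → ℝ) → ℝ) (z y : Fin d → ℝ) :
    fderiv ℝ g z y = ∑ j, pderiv' j g z * y j := by
  conv_lhs => rw [pi_eq_sum_univ' y]
  simp [pderiv', map_sum, mul_comm]

/-- Differentiating along the line puts one more coordinate in front of every multi-index. -/
lemma hasDerivAt_lineDerivSum {d : ℕ} {f : (Fin d → ℝ) → ℝ} (hf : ContDiff ℝ (⊤ : ℕ∞) f)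
    (y : Fin d → ℝ) (k : ℕ) (t : ℝ) :
    HasDerivAt (lineDerivSum f y k) (lineDerivSum f y (k + 1) t) t := by
  have h : HasDerivAt (lineDerivSum f y k) (∑ α : Fin k → Fin d,
      fderiv ℝ (pderivMulti (List.ofFn α) f) (t • y) y * ∏ i, y (α i)) t := by
    unfold lineDerivSum
    exact HasDerivAt.fun_sum fun α _ =>
      (hasDerivAt_comp_smul (contDiff_pderivMulti hf _) y t).mul_const _
  convert h using 1
  unfold lineDerivSum
  rw [← (Fin.consEquiv fun _ : Fin (k + 1) => Fin d).sum_comp, Fintype.sum_prod_type,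
    Finset.sum_comm]
  refine Finset.sum_congr rfl fun α _ => ?_
  rw [fderiv_apply_eq_sum_pderiv, Finset.sum_mul]
  refine Finset.sum_congr rfl fun j _ => ?_
  simp [Fin.consEquiv, List.ofFn_succ, pderivMulti, Fin.prod_univ_succ, mul_assoc]

lemma iteratedDeriv_comp_smul {d : ℕ} {f : (Fin d → ℝ) → ℝ} (hf : ContDiff ℝ (⊤ : ℕ∞) f)
    (y : Fin d → ℝ) (k : ℕ) :
    iteratedDeriv k (fun s : ℝ => f (s • y)) = lineDerivSum f y k := by
  induction k with
  | zero => ext t; simp [lineDerivSum, pderivMulti]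
  | succ k ih =>
    rw [iteratedDeriv_succ, ih]
    ext t
    exact (hasDerivAt_lineDerivSum hf y k t).deriv

/-- The sum has `d ^ k` terms, each at most `(1/2) c ^ k k! M ^ k` because `σ ≤ 1`. -/
lemma abs_lineDerivSum_le {d : ℕ} {c σ : ℝ} (hc : 0 < c) (hσ : σ ≤ 1) {f : (Fin d → ℝ) → ℝ}
    (hGevrey : ∀ y : Fin d → ℝ, ∀ α : List (Fin d),
      |pderivMulti α f y| ≤
        1 / 2 * c ^ α.length * ((Nat.factorial α.length : ℕ) : ℝ) ^ σ)
    (y : Fin d → ℝ) {M : ℝ} (hy : ∀ i, |y i| ≤ M) (k : ℕ) (t : ℝ) :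
    |lineDerivSum f y k t| ≤ 1 / 2 * (k.factorial : ℝ) * (c * d * M) ^ k := by
  have hfac : ((k.factorial : ℕ) : ℝ) ^ σ ≤ k.factorial := by
    have h1 : (1 : ℝ) ≤ k.factorial := by exact_mod_cast k.factorial_pos
    simpa using Real.rpow_le_rpow_of_exponent_le h1 hσ
  calc |lineDerivSum f y k t|
      ≤ ∑ α : Fin k → Fin d, |pderivMulti (List.ofFn α) f (t • y) * ∏ i, y (α i)| :=
        Finset.abs_sum_le_sum_abs _ _
    _ ≤ ∑ _α : Fin k → Fin d, (1 / 2 * c ^ k * (k.factorial : ℝ)) * M ^ k := by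
        refine Finset.sum_le_sum fun α _ => ?_
        rw [abs_mul]
        refine mul_le_mul ?_ ?_ (abs_nonneg _) (by positivity)
        · refine (hGevrey _ _).trans ?_
          rw [List.length_ofFn]
          gcongr
        · rw [Finset.abs_prod]
          exact (Finset.prod_le_prod (fun _ _ => abs_nonneg _) fun i _ => hy (α i)).trans
            (by simp)
    _ = 1 / 2 * (k.factorial : ℝ) * (c * d * M) ^ k := by
        simp only [Finset.sum_const, Finset.card_univ, Fintype.card_fun, Fintype.card_fin,
          nsmul_eq_mul, Nat.cast_pow]
        ring

/-! ### Convergence of the Taylor series -/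

/-- A Gevrey function with `σ ≤ 1` equals its Taylor series at `0` wherever `c d ‖y‖_∞ < 1`, with
`M` standing for any bound on `‖y‖_∞`:
by Lagrange's formula on the segment from `0` to `y` the remainder of order `n` is at most
`(1/2) (c d M) ^ (n + 1)`. -/
lemma tendsto_taylor_sum {d : ℕ} {c σ : ℝ} (hc : 0 < c) (hσ : σ ≤ 1) {f : (Fin d → ℝ) → ℝ}
    (hf : ContDiff ℝ (⊤ : ℕ∞) f)
    (hGevrey : ∀ y : Fin d → ℝ, ∀ α : List (Fin d),
      |pderivMulti α f y| ≤
        1 / 2 * c ^ α.length * ((Nat.factorial α.length : ℕ) : ℝ) ^ σ)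
    (y : Fin d → ℝ) {M : ℝ} (hM : 0 ≤ M) (hy : ∀ i, |y i| ≤ M) (hr : c * d * M < 1) :
    Filter.Tendsto (fun n => ∑ k ∈ Finset.range n, 1 / (k.factorial : ℝ) * lineDerivSum f y k 0)
      Filter.atTop (nhds (f y)) := by
  set g : ℝ → ℝ := fun s => f (s • y) with hgdef
  have hg : ContDiff ℝ (⊤ : ℕ∞) g := hf.comp (contDiff_id.smul contDiff_const)
  have hr0 : 0 ≤ c * d * M := by positivity
  have key : ∀ n : ℕ, |f y - ∑ k ∈ Finset.range (n + 1),
      1 / (k.factorial : ℝ) * lineDerivSum f y k 0| ≤ 1 / 2 * (c * d * M) ^ (n + 1) := by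
    intro n
    obtain ⟨t, -, ht⟩ := taylor_mean_remainder_lagrange_iteratedDeriv (f := g) (x := 1) (x₀ := 0)
      (n := n) zero_ne_one ((hg.of_le (by exact_mod_cast le_top)).contDiffOn)
    have hT : taylorWithinEval g n (Set.uIcc 0 1) 0 1 = ∑ k ∈ Finset.range (n + 1),
        1 / (k.factorial : ℝ) * lineDerivSum f y k 0 := by
      rw [taylor_within_apply]
      refine Finset.sum_congr rfl fun k _ => ?_
      rw [iteratedDerivWithin_eq_iteratedDeriv (uniqueDiffOn_uIcc zero_ne_one)
        ((hg.of_le (by exact_mod_cast le_top)).contDiffAt) (by simp),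
        hgdef, iteratedDeriv_comp_smul hf]
      simp
    have hg1 : g 1 = f y := by simp [hgdef]
    rw [hT, hg1, hgdef, iteratedDeriv_comp_smul hf] at ht
    rw [ht]
    have hb := abs_lineDerivSum_le hc hσ hGevrey y hy (n + 1) t
    have hpos : (0 : ℝ) < ((n + 1).factorial : ℝ) := by positivity
    rw [sub_zero, one_pow, mul_one, abs_div, abs_of_pos hpos, div_le_iff₀ hpos]
    linarith
  have hlim : Filter.Tendsto (fun n : ℕ => 1 / 2 * (c * d * M) ^ (n + 1)) Filter.atTop (nhds 0) := by
    have h := ((tendsto_pow_atTop_nhds_zero_of_lt_one hr0 hr).comp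
      (Filter.tendsto_add_atTop_nat 1)).const_mul (1 / 2)
    rwa [mul_zero] at h
  have h0 := squeeze_zero_norm (fun n => (Real.norm_eq_abs _).trans_le (key n)) hlim
  rw [← Filter.tendsto_add_atTop_iff_nat 1]
  simpa using (tendsto_const_nhds (x := f y)).sub h0

/-! ### Moments of the central difference coefficients -/

/-- The coefficients with the opposite sign and without the factor `1/ℓ`: up to normalisation, the
signed binomial coefficients of the `2m`-th central difference. -/
noncomputable def centralWeight (m : ℕ) (ℓ : ℤ) : ℝ :=
  (-1 : ℝ) ^ ℓ * (Nat.factorial m : ℝ) ^ 2 /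
    ((Nat.factorial (m + ℓ).toNat : ℝ) * (Nat.factorial (m - ℓ).toNat : ℝ))

/-- The `2m`-th forward difference with step `1`, started at `-m`, annihilates polynomials of degree
below `2m`. -/
lemma sum_centralWeight_mul_pow (m i : ℕ) (hi : i < 2 * m) :
    ∑ ℓ ∈ Finset.Icc (-(m : ℤ)) (m : ℤ), centralWeight m ℓ * (ℓ : ℝ) ^ i = 0 := by
  have h0 := congrFun (fwdDiff_iter_pow_eq_zero_of_lt (R := ℝ) hi) (-(m : ℝ))
  rw [fwdDiff_iter_eq_sum_shift] at h0
  have hre : ∑ ℓ ∈ Finset.Icc (-(m : ℤ)) (m : ℤ), centralWeight m ℓ * (ℓ : ℝ) ^ i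
      = ∑ k ∈ Finset.range (2 * m + 1),
        centralWeight m ((k : ℤ) - m) * (((k : ℤ) - m : ℤ) : ℝ) ^ i := by
    symm
    refine Finset.sum_bij (fun k _ => (k : ℤ) - m) ?_ ?_ ?_ ?_
    · intro k hk
      simp only [Finset.mem_range, Finset.mem_Icc] at *
      omega
    · intro a _ b _ h
      omega
    · intro ℓ hℓ
      simp only [Finset.mem_Icc] at hℓ
      exact ⟨(ℓ + m).toNat, by simp only [Finset.mem_range]; omega, by omega⟩
    · intros
      rfl
  rw [hre]
  have hterm : ∀ k ∈ Finset.range (2 * m + 1),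
      centralWeight m ((k : ℤ) - m) * (((k : ℤ) - m : ℤ) : ℝ) ^ i =
      ((-1) ^ m * (m.factorial : ℝ) ^ 2 / ((2 * m).factorial : ℝ)) *
        (((-1 : ℤ) ^ (2 * m - k) * (2 * m).choose k) • (-(m : ℝ) + k • (1 : ℝ)) ^ i) := by
    intro k hk
    have hk' : k ≤ 2 * m := by simp only [Finset.mem_range] at hk; omega
    have e1 : ((m : ℤ) + (k - m)).toNat = k := by omega
    have e2 : ((m : ℤ) - (k - m)).toNat = 2 * m - k := by omega
    have hsign : (-1 : ℝ) ^ ((k : ℤ) - m) = (-1) ^ m * (-1) ^ (2 * m - k) := by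
      have hodd : (-1 : ℝ) ^ (2 * m - k) = (-1) ^ k := by
        rcases Nat.even_or_odd k with h | h
        · rw [h.neg_one_pow, (Nat.even_sub hk' |>.2 (by simp [h])).neg_one_pow]
        · have : Odd (2 * m - k) := by
            obtain ⟨r, hr⟩ := h
            exact ⟨m - r - 1, by omega⟩
          rw [h.neg_one_pow, this.neg_one_pow]
      rw [hodd, zpow_sub₀ (by norm_num), zpow_natCast, zpow_natCast,
        div_eq_iff (pow_ne_zero _ (by norm_num))]
      rw [mul_right_comm, ← mul_pow]; simp
    unfold centralWeight
    rw [e1, e2, hsign, zsmul_eq_mul]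
    have hch : ((2 * m).choose k : ℝ) =
        ((2 * m).factorial : ℝ) / ((k.factorial : ℝ) * ((2 * m - k).factorial : ℝ)) :=
      Nat.cast_choose ℝ hk'
    push_cast
    rw [hch]
    have : -(m : ℝ) + k • (1 : ℝ) = k - m := by simp; ring
    rw [this]
    have := Nat.factorial_pos (2 * m)
    field_simp
  rw [Finset.sum_congr rfl hterm, ← Finset.mul_sum, h0]
  simp

/-- The moment of order `0` is `1`: the coefficients with `ℓ ≠ 0` are odd in `ℓ`. -/
lemma sum_centralCoeff (m : ℕ) :
    ∑ ℓ ∈ Finset.Icc (-(m : ℤ)) (m : ℤ), centralCoeff m ℓ = 1 := by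
  have hodd : ∑ ℓ ∈ Finset.Icc (-(m : ℤ)) (m : ℤ), (centralCoeff m ℓ - if ℓ = 0 then 1 else 0)
      = ∑ ℓ ∈ Finset.Icc (-(m : ℤ)) (m : ℤ), -(centralCoeff m ℓ - if ℓ = 0 then 1 else 0) := by
    refine Finset.sum_equiv (Equiv.neg ℤ) ?_ ?_
    · intro ℓ
      simp only [Finset.mem_Icc, Equiv.neg_apply]
      omega
    · intro ℓ _
      by_cases h : ℓ = 0
      · simp [h, centralCoeff]
      · have hs : (-1 : ℝ) ^ (-ℓ + 1) = (-1) ^ (ℓ + 1) := by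
          rw [zpow_add₀ (by norm_num), zpow_add₀ (by norm_num), zpow_neg, ← inv_zpow]
          norm_num
        simp only [Equiv.neg_apply, centralCoeff, h, neg_eq_zero, if_false, sub_zero]
        rw [hs, ← sub_eq_add_neg, sub_neg_eq_add]
        push_cast
        rw [mul_right_comm, neg_mul, neg_mul, div_neg, neg_neg]
  rw [Finset.sum_neg_distrib, Finset.sum_sub_distrib] at hodd
  have : ∑ ℓ ∈ Finset.Icc (-(m : ℤ)) (m : ℤ), (if ℓ = 0 then (1 : ℝ) else 0) = 1 := by
    simp
  linarith

lemma sum_centralCoeff_mul_pow_succ (m i : ℕ) (hi : i < 2 * m) :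
    ∑ ℓ ∈ Finset.Icc (-(m : ℤ)) (m : ℤ), centralCoeff m ℓ * (ℓ : ℝ) ^ (i + 1) =
      if i = 0 then 1 else 0 := by
  have hterm : ∀ ℓ ∈ Finset.Icc (-(m : ℤ)) (m : ℤ), centralCoeff m ℓ * (ℓ : ℝ) ^ (i + 1) =
      (if ℓ = 0 then (if i = 0 then 1 else 0) else 0) - centralWeight m ℓ * (ℓ : ℝ) ^ i := by
    intro ℓ _
    by_cases h : ℓ = 0
    · subst h
      by_cases hi0 : i = 0
      · subst hi0
        have := Nat.factorial_pos m
        simp [centralWeight]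
        field_simp
        simp
      · simp [hi0]
    · have hℓ : (ℓ : ℝ) ≠ 0 := by exact_mod_cast h
      simp only [centralCoeff, centralWeight, h, if_false]
      rw [zpow_add₀ (by norm_num)]
      field_simp
      ring
  rw [Finset.sum_congr rfl hterm, Finset.sum_sub_distrib, sum_centralWeight_mul_pow m i hi]
  simp

/-! ### The expansion of the smoothing -/

lemma lineDerivSum_smul_zero {d : ℕ} (f : (Fin d → ℝ) → ℝ) (x : Fin d → ℝ) (a : ℝ) (k : ℕ) :
    lineDerivSum f (a • x) k 0 = a ^ k * lineDerivSum f x k 0 := by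
  simp only [lineDerivSum, zero_smul, Pi.smul_apply, smul_eq_mul, Finset.prod_mul_distrib,
    Finset.prod_const, Finset.card_univ, Fintype.card_fin, Finset.mul_sum]
  exact Finset.sum_congr rfl fun α _ => by ring

theorem smoothing_taylor_expansion
    (d m : ℕ) (hm : 2 ≤ m) (c σ : ℝ) (hc : 0 < c) (hσ : σ ≤ 1)
    (f : (Fin d → ℝ) → ℝ) (hf : ContDiff ℝ (⊤ : ℕ∞) f)
    (hGevrey : ∀ y : Fin d → ℝ, ∀ α : List (Fin d),
      |pderivMulti α f y| ≤
        1 / 2 * c ^ α.length * ((Nat.factorial α.length : ℕ) : ℝ) ^ σ)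
    (x : Fin d → ℝ) (hx : (m : ℝ) * c * d * (⨆ i, |x i|) < 1) :
    Summable (fun k : ℕ =>
      |(1 / (Nat.factorial k : ℝ)) *
        (∑ α : Fin k → Fin d, pderivMulti (List.ofFn α) f 0 * ∏ i, x (α i)) *
        (∑ ℓ ∈ Finset.Icc (-(m : ℤ)) (m : ℤ), centralCoeff m ℓ * (ℓ : ℝ) ^ k)|) ∧
    smoothing m f x = f 0 + fderiv ℝ f 0 x +
      ∑' k : ℕ,
        (1 / (Nat.factorial (k + (2 * m + 1)) : ℝ)) *
          (∑ α : Fin (k + (2 * m + 1)) → Fin d,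
            pderivMulti (List.ofFn α) f 0 * ∏ i, x (α i)) *
          (∑ ℓ ∈ Finset.Icc (-(m : ℤ)) (m : ℤ),
            centralCoeff m ℓ * (ℓ : ℝ) ^ (k + (2 * m + 1))) := by
  set M : ℝ := ⨆ i, |x i| with hMdef
  have hxM : ∀ i, |x i| ≤ M := fun i => le_ciSup (f := fun i => |x i|) (Set.finite_range _).bddAbove i
  have hM : 0 ≤ M := Real.iSup_nonneg fun i => abs_nonneg _
  set S : ℕ → ℝ := fun k =>
    ∑ ℓ ∈ Finset.Icc (-(m : ℤ)) (m : ℤ), centralCoeff m ℓ * (ℓ : ℝ) ^ k with hS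
  set t : ℕ → ℝ := fun k => 1 / (k.factorial : ℝ) * lineDerivSum f x k 0 * S k with ht
  have hterm : ∀ k : ℕ, (1 / (Nat.factorial k : ℝ)) *
        (∑ α : Fin k → Fin d, pderivMulti (List.ofFn α) f 0 * ∏ i, x (α i)) *
        (∑ ℓ ∈ Finset.Icc (-(m : ℤ)) (m : ℤ), centralCoeff m ℓ * (ℓ : ℝ) ^ k) = t k := by
    intro k
    simp [ht, hS, lineDerivSum]
  simp only [hterm]
  have habsℓ : ∀ ℓ ∈ Finset.Icc (-(m : ℤ)) (m : ℤ), |(ℓ : ℝ)| ≤ m := by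
    intro ℓ hℓ
    rw [Finset.mem_Icc] at hℓ
    rw [abs_le]
    exact ⟨by exact_mod_cast hℓ.1, by exact_mod_cast hℓ.2⟩
  have hr0 : 0 ≤ c * d * M := by positivity
  have hsum : Summable fun k => |t k| := by
    set A : ℝ := ∑ ℓ ∈ Finset.Icc (-(m : ℤ)) (m : ℤ), |centralCoeff m ℓ| with hA
    have hSle : ∀ k, |S k| ≤ A * (m : ℝ) ^ k := by
      intro k
      refine (Finset.abs_sum_le_sum_abs _ _).trans ?_
      rw [hA, Finset.sum_mul]
      refine Finset.sum_le_sum fun ℓ hℓ => ?_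
      rw [abs_mul, abs_pow]
      gcongr
      exact habsℓ ℓ hℓ
    have hgeo : Summable fun k : ℕ => (1 / 2 * A) * ((m : ℝ) * c * d * M) ^ k :=
      (summable_geometric_of_lt_one (by positivity) hx).mul_left _
    refine Summable.of_nonneg_of_le (fun _ => abs_nonneg _) (fun k => ?_) hgeo
    have hb := abs_lineDerivSum_le hc hσ hGevrey x hxM k 0
    have hpos : (0 : ℝ) < (k.factorial : ℝ) := by positivity
    calc |t k| = 1 / (k.factorial : ℝ) * |lineDerivSum f x k 0| * |S k| := by
          rw [ht]
          simp only [abs_mul, abs_div, abs_one, Nat.abs_cast]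
      _ ≤ 1 / (k.factorial : ℝ) * (1 / 2 * (k.factorial : ℝ) * (c * d * M) ^ k) *
            (A * (m : ℝ) ^ k) := by
          gcongr
          exact hSle k
      _ = (1 / 2 * A) * ((m : ℝ) * c * d * M) ^ k := by
          field_simp
          ring
  refine ⟨hsum, ?_⟩
  have htsum : Summable t := hsum.of_abs
  have hlim : Filter.Tendsto (fun n => ∑ k ∈ Finset.range n, t k) Filter.atTop
      (nhds (smoothing m f x)) := by
    have hℓ : ∀ ℓ ∈ Finset.Icc (-(m : ℤ)) (m : ℤ), Filter.Tendsto
        (fun n => centralCoeff m ℓ * ∑ k ∈ Finset.range n,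
          1 / (k.factorial : ℝ) * lineDerivSum f ((ℓ : ℝ) • x) k 0)
        Filter.atTop (nhds (centralCoeff m ℓ * f ((ℓ : ℝ) • x))) := by
      intro ℓ hℓ
      refine (tendsto_taylor_sum hc hσ hf hGevrey _ (M := m * M) (by positivity) ?_ ?_).const_mul _
      · intro i
        rw [Pi.smul_apply, smul_eq_mul, abs_mul]
        exact mul_le_mul (habsℓ ℓ hℓ) (hxM i) (abs_nonneg _) (by positivity)
      · calc c * d * (m * M) = m * c * d * M := by ring
          _ < 1 := hx
    refine (tendsto_finsetSum _ hℓ).congr fun n => ?_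
    simp only [Finset.mul_sum]
    rw [Finset.sum_comm]
    refine Finset.sum_congr rfl fun k _ => ?_
    rw [ht]
    simp only [hS, Finset.mul_sum, lineDerivSum_smul_zero]
    exact Finset.sum_congr rfl fun ℓ _ => by ring
  have htot : ∑' k, t k = smoothing m f x :=
    tendsto_nhds_unique htsum.hasSum.tendsto_sum_nat hlim
  have ht0 : t 0 = f 0 := by
    simp [ht, hS, lineDerivSum, pderivMulti, sum_centralCoeff]
  have ht1 : t 1 = fderiv ℝ f 0 x := by
    have hS1 : S 1 = 1 := by simpa [hS] using sum_centralCoeff_mul_pow_succ m 0 (by omega)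
    -- Both sides are the derivative at `0` of `s ↦ f (s • x)`.
    have h1 := hasDerivAt_lineDerivSum hf x 0 0
    have h2 := hasDerivAt_comp_smul hf x 0
    have he : lineDerivSum f x 0 = fun s : ℝ => f (s • x) := by
      ext s; simp [lineDerivSum, pderivMulti]
    rw [he] at h1
    have h3 := h1.unique h2
    simp only [zero_smul, zero_add] at h3
    simp [ht, hS1, h3]
  have htk : ∀ k ∈ Finset.range (2 * m + 1), k ∉ Finset.range 2 → t k = 0 := by
    intro k hk hk2
    simp only [Finset.mem_range, not_lt] at hk hk2
    obtain ⟨i, rfl⟩ : ∃ i, k = i + 1 := ⟨k - 1, by omega⟩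
    have hSk : S (i + 1) = 0 := by
      rw [hS]
      exact (sum_centralCoeff_mul_pow_succ m i (by omega)).trans (if_neg (by omega))
    simp [ht, hSk]
  rw [← htot, ← htsum.sum_add_tsum_nat_add (2 * m + 1),
    ← Finset.sum_subset (Finset.range_mono (by omega : 2 ≤ 2 * m + 1)) htk,
    Finset.sum_range_succ, Finset.sum_range_one, ht0, ht1]
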